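/- arXiv:2510.17107 — 2 statements merged into one kernel-verified Lean document; each statement's English description precedes it below -/
import Mathlib

section
/- (Separation of layers.) Let Q ∈ 𝒞 and n ∈ ℕ₀. Suppose Q₁ = B(x₁,r₁) is a ball of P^{(n)} and Q₂ = B(x₂,r₂) is a ball of 𝒞 belonging to the (n+4)-th layer, i.e. Q₂ ⊂ Q^{(n+4)} and Q₂ ⊄ Q^{(n+3)}. Then dist(Q₁, Q₂) ≥ max{κ(r₁ + r₂), 1}, where κ := √(1 + 2/η²) − 1. -/
open MeasureTheory Real Set Metric Filter
open scoped BigOperators ENNReal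

noncomputable section

/-- Three-dimensional Euclidean space. -/
abbrev E3 : Type := EuclideanSpace ℝ (Fin 3)

/-- The `i`-th standard basis vector of `ℝ³`. -/
def ev3 (i : Fin 3) : E3 := EuclideanSpace.single i (1 : ℝ)

/-- A (closed) ball, encoded by its center and its radius. -/
abbrev BallData : Type := E3 × ℝ

/-- The set of points of a ball. -/
def ballSet (B : BallData) : Set E3 := Metric.closedBall B.1 B.2

/-- The volume `(4π/3) r³` of a ball. -/
def ballVol (B : BallData) : ℝ := (4 * Real.pi / 3) * B.2 ^ 3

/-- A cover `𝒞 = 𝒞^{σ,η}` of `ℝ³` by closed balls of radius `≥ 1` (volume `≥ 4π/3`) such that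
(i) each ball intersects at most `σ` other balls of `𝒞`, and (ii) intersecting balls have
comparable sizes: `1/η ≤ |Q|^{1/3}/|Q'|^{1/3} ≤ η`. -/
structure IsCover (σ η : ℝ) (𝒞 : Set BallData) : Prop where
  radius_ge_one : ∀ B ∈ 𝒞, (1 : ℝ) ≤ B.2
  covers : ∀ x : E3, ∃ B ∈ 𝒞, x ∈ ballSet B
  overlap_finite : ∀ B ∈ 𝒞, {B' | B' ∈ 𝒞 ∧ B' ≠ B ∧ (ballSet B ∩ ballSet B').Nonempty}.Finite
  overlap_card : ∀ B ∈ 𝒞,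
    (({B' | B' ∈ 𝒞 ∧ B' ≠ B ∧ (ballSet B ∩ ballSet B').Nonempty}.ncard : ℝ)) ≤ σ
  comparable_lb : ∀ B ∈ 𝒞, ∀ B' ∈ 𝒞, (ballSet B ∩ ballSet B').Nonempty →
    1 / η ≤ ballVol B ^ ((1:ℝ)/3) / ballVol B' ^ ((1:ℝ)/3)
  comparable_ub : ∀ B ∈ 𝒞, ∀ B' ∈ 𝒞, (ballSet B ∩ ballSet B').Nonempty →
    ballVol B ^ ((1:ℝ)/3) / ballVol B' ^ ((1:ℝ)/3) ≤ η

/-- The union `Q^{(n)}` of the layers `0,…,n` of balls of `𝒞` around `Q`: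
`Q^{(0)} = Q` and `Q^{(n+1)} = ⋃ {B ∈ 𝒞 : B ∩ Q^{(n)} ≠ ∅}`. -/
def layerU (𝒞 : Set BallData) (Q : BallData) : ℕ → Set E3
  | 0 => ballSet Q
  | n + 1 => ⋃ B ∈ {B | B ∈ 𝒞 ∧ (ballSet B ∩ layerU 𝒞 Q n).Nonempty}, ballSet B

/-- The collection `P^{(n)}` of balls in layers `0` to `n`: `P^{(0)} = {Q}` and for `n ≥ 1`,
`P^{(n)} = {B ∈ 𝒞 : B ∩ Q^{(n-1)} ≠ ∅}`. -/
def PColl (𝒞 : Set BallData) (Q : BallData) : ℕ → Set BallData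
  | 0 => {Q}
  | n + 1 => {B | B ∈ 𝒞 ∧ (ballSet B ∩ layerU 𝒞 Q n).Nonempty}

/-- The union `S^{(n)}` of balls of the `n`-th layer: balls contained in `Q^{(n)}` but not
in `Q^{(n-1)}` (for `n ≥ 1`; `n - 1` is truncated subtraction). -/
def SLayer (𝒞 : Set BallData) (Q : BallData) (n : ℕ) : Set E3 :=
  ⋃ B ∈ {B | B ∈ 𝒞 ∧ ballSet B ⊆ layerU 𝒞 Q n ∧ ¬ ballSet B ⊆ layerU 𝒞 Q (n - 1)}, ballSet B

/-- Distance between two subsets of `ℝ³`. -/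
def setDistance (A B : Set E3) : ℝ := sInf {d : ℝ | ∃ a ∈ A, ∃ b ∈ B, d = dist a b}

variable {F : Type} [NormedAddCommGroup F] [NormedSpace ℝ F]

/-- The square of the Morrey-type norm `‖f‖_M`, i.e.
`‖f‖_M² = sup_{B ∈ 𝒞} |B|^{-2/3} ∫_B |f|²`. -/
def MnSq (𝒞 : Set BallData) (f : E3 → F) : ℝ :=
  sSup {a : ℝ | ∃ B ∈ 𝒞, a = ballVol B ^ (-(2:ℝ)/3) * ∫ x in ballSet B, ‖f x‖ ^ 2}

/-- Membership in the space `M = M^{2,2}_𝒞`. -/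
def MemM (𝒞 : Set BallData) (f : E3 → F) : Prop :=
  (∀ B ∈ 𝒞, IntegrableOn (fun x => ‖f x‖ ^ 2) (ballSet B) volume) ∧
  BddAbove {a : ℝ | ∃ B ∈ 𝒞, a = ballVol B ^ (-(2:ℝ)/3) * ∫ x in ballSet B, ‖f x‖ ^ 2}

/-- The Morrey-type norm `‖f‖_M`. -/
def Mn (𝒞 : Set BallData) (f : E3 → F) : ℝ := Real.sqrt (MnSq 𝒞 f)

/-- `|∇f|² = ∑_i |∂_i f|²` (Frobenius norm squared of the spatial gradient). -/
def gradSq (f : E3 → F) (x : E3) : ℝ := ∑ i : Fin 3, ‖fderiv ℝ f x (ev3 i)‖ ^ 2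

/-- `α_t[u] = esssup_{0<s<t} ‖u(s)‖_M²`. -/
def alphaT (𝒞 : Set BallData) (u : ℝ → E3 → F) (t : ℝ) : ℝ :=
  essSup (fun s => MnSq 𝒞 (u s)) (volume.restrict (Ioo 0 t))

/-- `β_t[u] = sup_{B ∈ 𝒞} |B|^{-2/3} ∫₀ᵗ ∫_B |∇u|²`. -/
def betaT (𝒞 : Set BallData) (u : ℝ → E3 → F) (t : ℝ) : ℝ :=
  sSup {a : ℝ | ∃ B ∈ 𝒞,
    a = ballVol B ^ (-(2:ℝ)/3) * ∫ s in Ioc (0:ℝ) t, ∫ x in ballSet B, gradSq (u s) x}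

/-- Divergence of a vector field. -/
def divg (f : E3 → E3) (x : E3) : ℝ := ∑ i : Fin 3, fderiv ℝ f x (ev3 i) i

/-- Laplacian of a scalar function. -/
def lapl (φ : E3 → ℝ) (x : E3) : ℝ :=
  ∑ i : Fin 3, fderiv ℝ (fun y => fderiv ℝ φ y (ev3 i)) x (ev3 i)

/-- The kernel `K_{ij}(z) = ∂_i∂_j (4π|z|)⁻¹ = (3 z_i z_j − δ_{ij}|z|²)/(4π|z|⁵)`. -/
def Kker (i j : Fin 3) (z : E3) : ℝ :=
  (3 * z i * z j - (if i = j then (1:ℝ) else 0) * ‖z‖ ^ 2) / (4 * Real.pi * ‖z‖ ^ 5)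

/-- The kernel `L_j(z) = z_j/(4π|z|³)`. -/
def Lker (j : Fin 3) (z : E3) : ℝ := z j / (4 * Real.pi * ‖z‖ ^ 3)

/-- Weak (distributional) divergence-freeness of a vector field on `ℝ³`. -/
def WeaklyDivFree (f : E3 → E3) : Prop :=
  ∀ φ : E3 → ℝ, ContDiff ℝ (⊤ : ℕ∞) φ → HasCompactSupport φ →
    (∫ x, ∑ i : Fin 3, f x i * fderiv ℝ φ x (ev3 i)) = 0

/-- Two balls meet. -/
def Meets (A B : BallData) : Prop := (ballSet A ∩ ballSet B).Nonempty

lemma Meets.symm' {A B : BallData} (h : Meets A B) : Meets B A := by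
  unfold Meets at *
  rwa [Set.inter_comm]

lemma layer_step {𝒞 : Set BallData} {Q A B : BallData} {m : ℕ} (hA : ballSet A ⊆ layerU 𝒞 Q m)
    (hB : B ∈ 𝒞) (h : Meets A B) : ballSet B ⊆ layerU 𝒞 Q (m + 1) := by
  obtain ⟨x, hxA, hxB⟩ := h
  intro y hy
  simp only [layerU, Set.mem_iUnion]
  exact ⟨B, ⟨hB, x, hxB, hA hxA⟩, hy⟩

lemma PColl_sub {𝒞 : Set BallData} {Q B : BallData} (hQ : Q ∈ 𝒞) {m : ℕ}
    (h : B ∈ PColl 𝒞 Q m) : B ∈ 𝒞 ∧ ballSet B ⊆ layerU 𝒞 Q m := by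
  cases m with
  | zero =>
    have : B = Q := h
    subst this
    exact ⟨hQ, subset_rfl⟩
  | succ m =>
    have h' : B ∈ 𝒞 ∧ (ballSet B ∩ layerU 𝒞 Q m).Nonempty := h
    refine ⟨h'.1, fun y hy => ?_⟩
    simp only [layerU, Set.mem_iUnion]
    exact ⟨B, h', hy⟩

lemma radius_le {σ η : ℝ} {𝒞 : Set BallData} (hcov : IsCover σ η 𝒞) {A B : BallData}
    (hA : A ∈ 𝒞) (hB : B ∈ 𝒞) (h : Meets A B) : A.2 ≤ η * B.2 := by
  have h1 := hcov.comparable_ub A hA B hB h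
  have a1 := hcov.radius_ge_one A hA
  have b1 := hcov.radius_ge_one B hB
  have key : ∀ r : ℝ, 1 ≤ r → ((4 * Real.pi / 3) * r ^ 3) ^ ((1:ℝ)/3)
      = (4 * Real.pi / 3) ^ ((1:ℝ)/3) * r := by
    intro r hr
    rw [Real.mul_rpow (by positivity) (by positivity), ← Real.rpow_natCast,
      ← Real.rpow_mul (by linarith)]
    norm_num
  unfold ballVol at h1
  rw [key _ a1, key _ b1] at h1
  have hc : 0 < (4 * Real.pi / 3) ^ ((1:ℝ)/3) := by positivity
  rw [mul_div_mul_left _ _ hc.ne', div_le_iff₀ (by linarith)] at h1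
  exact h1

lemma finite_at {σ η : ℝ} {𝒞 : Set BallData} (hcov : IsCover σ η 𝒞) (q : E3) :
    {B | B ∈ 𝒞 ∧ q ∈ ballSet B}.Finite := by
  obtain ⟨B0, h0, hq⟩ := hcov.covers q
  refine ((hcov.overlap_finite B0 h0).insert B0).subset ?_
  rintro B ⟨hB, hqB⟩
  by_cases h : B = B0
  · exact Or.inl h
  · exact Or.inr ⟨hB, h, q, hq, hqB⟩

lemma finite_near {σ η : ℝ} {𝒞 : Set BallData} (hcov : IsCover σ η 𝒞) (x : E3) :
    {B | B ∈ 𝒞 ∧ (ballSet B ∩ Metric.ball x 1).Nonempty}.Finite := by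
  obtain ⟨t, -, htf, ht⟩ := (isCompact_closedBall x (2:ℝ)).finite_cover_balls
    (e := 1) one_pos
  refine (htf.biUnion (fun q _ => finite_at hcov q)).subset ?_
  rintro ⟨c, r⟩ ⟨hB, z, hzB, hzx⟩
  have hr : 1 ≤ r := hcov.radius_ge_one _ hB
  have hzc : dist z c ≤ r := hzB
  have hzx' : dist z x < 1 := hzx
  have hr0 : 0 < r := by linarith
  have hi : r⁻¹ ≤ 1 := inv_le_one_of_one_le₀ hr
  have hi0 : 0 < r⁻¹ := inv_pos.mpr hr0
  set p : E3 := AffineMap.lineMap z c r⁻¹ with hp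
  have h1 : dist p z ≤ 1 := by
    rw [hp, dist_lineMap_left, Real.norm_of_nonneg hi0.le]
    calc r⁻¹ * dist z c ≤ r⁻¹ * r := by gcongr
      _ = 1 := inv_mul_cancel₀ hr0.ne'
  have h2 : dist p c ≤ r - 1 := by
    rw [hp, dist_lineMap_right, Real.norm_of_nonneg (by linarith)]
    calc (1 - r⁻¹) * dist z c ≤ (1 - r⁻¹) * r := by
          apply mul_le_mul_of_nonneg_left hzc; linarith
      _ = r - 1 := by field_simp
  have h3 : p ∈ Metric.closedBall x 2 := by
    have := dist_triangle p z x
    rw [Metric.mem_closedBall]; linarith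
  obtain ⟨q, hq, hpq⟩ := Set.mem_iUnion₂.mp (ht h3)
  refine Set.mem_iUnion₂.mpr ⟨q, hq, hB, ?_⟩
  have h4 : dist p q < 1 := hpq
  have := dist_triangle q p c
  rw [dist_comm q p] at this
  change dist q c ≤ r
  linarith

lemma closed_union {σ η : ℝ} {𝒞 : Set BallData} (hcov : IsCover σ η 𝒞) (S : Set BallData)
    (hS : S ⊆ 𝒞) : IsClosed (⋃ B : S, ballSet B.1) := by
  apply LocallyFinite.isClosed_iUnion
  · intro x
    refine ⟨Metric.ball x 1, Metric.ball_mem_nhds x one_pos, ?_⟩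
    have := (finite_near hcov x).preimage (f := fun B : S => B.1) Subtype.val_injective.injOn
    exact this.subset (fun B hB => ⟨hS B.2, hB⟩)
  · intro B
    exact Metric.isClosed_closedBall

/-- The intermediate ball attached to `A`. -/
lemma exists_mid {σ η : ℝ} (hη : 0 < η) {𝒞 : Set BallData} (hcov : IsCover σ η 𝒞)
    {A D : BallData} (hA : A ∈ 𝒞) (hD : D ∈ 𝒞)
    (H : ∀ B ∈ 𝒞, ∀ C ∈ 𝒞, Meets A B → Meets B C → Meets C D → False) :
    ∃ C ∈ 𝒞, ¬ Meets C A ∧ ¬ Meets C D ∧ A.2 ≤ η ^ 2 * C.2 ∧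
      ∃ p ∈ segment ℝ A.1 D.1, p ∈ ballSet C := by
  have self : ∀ B ∈ 𝒞, B.1 ∈ ballSet B := fun B hB =>
    Metric.mem_closedBall_self (by linarith [hcov.radius_ge_one B hB])
  have mself : ∀ B ∈ 𝒞, Meets B B := fun B hB => ⟨B.1, self B hB, self B hB⟩
  have hc1 := closed_union hcov {B | B ∈ 𝒞 ∧ Meets B A} (fun B hB => hB.1)
  have hc2 := closed_union hcov {B | B ∈ 𝒞 ∧ ¬ Meets B A} (fun B hB => hB.1)
  have hpre : IsPreconnected (segment ℝ A.1 D.1) := (convex_segment _ _).isPreconnected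
  obtain ⟨p, hp, hp1, hp2⟩ := isPreconnected_closed_iff.mp hpre _ _ hc1 hc2
    (by
      intro y _
      obtain ⟨B, hB, hy⟩ := hcov.covers y
      by_cases h : Meets B A
      · exact Or.inl (Set.mem_iUnion.mpr ⟨⟨B, hB, h⟩, hy⟩)
      · exact Or.inr (Set.mem_iUnion.mpr ⟨⟨B, hB, h⟩, hy⟩))
    ⟨A.1, left_mem_segment _ _ _, Set.mem_iUnion.mpr ⟨⟨A, hA, mself A hA⟩, self A hA⟩⟩
    ⟨D.1, right_mem_segment _ _ _, Set.mem_iUnion.mpr ⟨⟨D, hD, fun h =>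
      H D hD D hD h.symm' (mself D hD) (mself D hD)⟩, self D hD⟩⟩
  obtain ⟨⟨B, hB, hBA⟩, hpB⟩ := Set.mem_iUnion.mp hp1
  obtain ⟨⟨C, hC, hCA⟩, hpC⟩ := Set.mem_iUnion.mp hp2
  have hBC : Meets B C := ⟨p, hpB, hpC⟩
  refine ⟨C, hC, hCA, fun h => H B hB C hC hBA.symm' hBC h, ?_, p, hp, hpC⟩
  have h1 := radius_le hcov hA hB hBA.symm'
  have h2 := radius_le hcov hB hC hBC
  nlinarith

lemma not_meets_dist {A B : BallData} (hA : 0 ≤ A.2) (hB : 0 ≤ B.2) (h : ¬ Meets A B) :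
    A.2 + B.2 ≤ dist A.1 B.1 := by
  by_contra hlt
  push Not at hlt
  apply h
  by_cases hs : A.2 + B.2 = 0
  · have := dist_nonneg (x := A.1) (y := B.1)
    linarith
  have hs' : 0 < A.2 + B.2 := by positivity
  have e : A.2 / (A.2 + B.2) * dist A.1 B.1 ≤ A.2 := by
    rw [div_mul_eq_mul_div, div_le_iff₀ hs']; nlinarith
  have e2 : (1 - A.2 / (A.2 + B.2)) * dist A.1 B.1 ≤ B.2 := by
    have : 1 - A.2 / (A.2 + B.2) = B.2 / (A.2 + B.2) := by field_simp; ring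
    rw [this, div_mul_eq_mul_div, div_le_iff₀ hs']; nlinarith
  have e3 : A.2 / (A.2 + B.2) ≤ 1 := by rw [div_le_iff₀ hs']; linarith
  refine ⟨AffineMap.lineMap A.1 B.1 (A.2 / (A.2 + B.2)), ?_, ?_⟩
  · change dist _ _ ≤ _
    rw [dist_lineMap_left, Real.norm_of_nonneg (by positivity)]
    exact e
  · change dist _ _ ≤ _
    rw [dist_lineMap_right, Real.norm_of_nonneg (by linarith)]
    exact e2

lemma geom_key (x y c p : E3) (r₁ r₂ ρ L₁ L₂ : ℝ) (hr₁ : 0 < r₁) (hr₂ : 0 < r₂) (hρ : 0 < ρ)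
    (hL₁ : 0 < L₁) (hL₂ : 0 < L₂) (h₁ : L₁ ^ 2 ≤ r₁ ^ 2 + 2 * r₁ * ρ)
    (h₂ : L₂ ^ 2 ≤ r₂ ^ 2 + 2 * r₂ * ρ) (hp : p ∈ segment ℝ x y) (hc : dist p c ≤ ρ)
    (hx : ρ + r₁ ≤ dist c x) (hy : ρ + r₂ ≤ dist c y) : L₁ + L₂ ≤ dist x y := by
  obtain ⟨a, b, ha, hb, hab, rfl⟩ := hp
  rw [dist_eq_norm] at hc hx hy ⊢
  have st : ‖a • x + b • y - c‖ ^ 2 = a * ‖c - x‖ ^ 2 + b * ‖c - y‖ ^ 2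
      - a * b * ‖x - y‖ ^ 2 := by
    have e1 : a • x + b • y - c = -(a • (c - x) + b • (c - y)) := by
      have : c = (a + b) • c := by rw [hab, one_smul]
      nth_rewrite 1 [this]
      module
    have e2 : x - y = (c - y) - (c - x) := by abel
    rw [e1, e2, norm_neg, norm_add_sq_real, norm_sub_sq_real (c - y) (c - x), norm_smul, norm_smul,
      inner_smul_left, inner_smul_right, real_inner_comm (c - x) (c - y),
      Real.norm_of_nonneg ha, Real.norm_of_nonneg hb]
    have : a = 1 - b := by linarith
    subst this
    simp only [conj_trivial]
    ring
  have hp2 : ‖a • x + b • y - c‖ ^ 2 ≤ ρ ^ 2 := by gcongr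
  have hx2 : (ρ + r₁) ^ 2 ≤ ‖c - x‖ ^ 2 := by gcongr
  have hy2 : (ρ + r₂) ^ 2 ≤ ‖c - y‖ ^ 2 := by gcongr
  have hx3 : ρ ^ 2 + L₁ ^ 2 ≤ ‖c - x‖ ^ 2 := by nlinarith
  have hy3 : ρ ^ 2 + L₂ ^ 2 ≤ ‖c - y‖ ^ 2 := by nlinarith
  have m1 := mul_le_mul_of_nonneg_left hx3 ha
  have m2 := mul_le_mul_of_nonneg_left hy3 hb
  have main : a * L₁ ^ 2 + b * L₂ ^ 2 ≤ a * b * ‖x - y‖ ^ 2 := by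
    have : a * ρ ^ 2 + b * ρ ^ 2 = ρ ^ 2 := by rw [← add_mul, hab, one_mul]
    nlinarith
  have main2 : a * b * (L₁ + L₂) ^ 2 ≤ a * L₁ ^ 2 + b * L₂ ^ 2 := by
    have : a = 1 - b := by linarith
    subst this
    nlinarith [sq_nonneg ((1 - b) * L₁ - b * L₂)]
  have hpos : 0 < a * L₁ ^ 2 + b * L₂ ^ 2 := by
    rcases ha.lt_or_eq with h | h
    · positivity
    · have : 0 < b := by linarith
      positivity
  have hab0 : 0 < a * b := by
    by_contra h
    nlinarith [sq_nonneg ‖x - y‖, mul_nonneg ha hb]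
  have : (L₁ + L₂) ^ 2 ≤ ‖x - y‖ ^ 2 := le_of_mul_le_mul_left (main2.trans main) hab0
  exact (sq_le_sq₀ (by positivity) (norm_nonneg _)).mp this

/-- **Separation of layers** (Lemma 3.1). If `Q₁ = B(x₁,r₁) ∈ P⁽ⁿ⁾` and `Q₂ = B(x₂,r₂)`
is a ball of `𝒞` belonging to the `(n+4)`-th layer (i.e. `Q₂ ⊆ Q⁽ⁿ⁺⁴⁾`, `Q₂ ⊄ Q⁽ⁿ⁺³⁾`),
then `dist(Q₁,Q₂) ≥ max{κ(r₁+r₂), 1}` where `κ = √(1+2/η²) − 1`. -/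
theorem separation_of_layers (σ η : ℝ) (hσ : 0 < σ) (hη : 0 < η)
    (𝒞 : Set BallData) (hcov : IsCover σ η 𝒞)
    (Q : BallData) (hQ : Q ∈ 𝒞) (n : ℕ)
    (Q₁ : BallData) (hQ₁ : Q₁ ∈ PColl 𝒞 Q n)
    (Q₂ : BallData) (hQ₂ : Q₂ ∈ 𝒞)
    (hsub : ballSet Q₂ ⊆ layerU 𝒞 Q (n + 4))
    (hnsub : ¬ ballSet Q₂ ⊆ layerU 𝒞 Q (n + 3)) :
    max ((Real.sqrt (1 + 2 / η ^ 2) - 1) * (Q₁.2 + Q₂.2)) 1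
      ≤ setDistance (ballSet Q₁) (ballSet Q₂) := by
  obtain ⟨hQ₁', hs1⟩ := PColl_sub hQ hQ₁
  have H : ∀ B ∈ 𝒞, ∀ C ∈ 𝒞, Meets Q₁ B → Meets B C → Meets C Q₂ → False :=
    fun B hB C hC h1 h2 h3 =>
      hnsub (layer_step (layer_step (layer_step hs1 hB h1) hC h2) hQ₂ h3)
  have r1 := hcov.radius_ge_one _ hQ₁'
  have r2 := hcov.radius_ge_one _ hQ₂
  have hη2 : 0 < η ^ 2 := by positivity
  obtain ⟨C, hC, hCA, hCD, hA, hD, p, hp, hpC⟩ : ∃ C ∈ 𝒞, ¬ Meets C Q₁ ∧ ¬ Meets C Q₂ ∧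
      Q₁.2 ≤ η ^ 2 * C.2 ∧ Q₂.2 ≤ η ^ 2 * C.2 ∧
      ∃ p ∈ segment ℝ Q₁.1 Q₂.1, p ∈ ballSet C := by
    obtain ⟨C, hC, c1, c2, c3, p, hp, hpC⟩ := exists_mid hη hcov hQ₁' hQ₂ H
    obtain ⟨C', hC', c1', c2', c3', p', hp', hpC'⟩ := exists_mid hη hcov hQ₂ hQ₁'
      (fun B hB C hC h1 h2 h3 => H C hC B hB h3.symm' h2.symm' h1.symm')
    rw [segment_symm] at hp'
    rcases le_total C.2 C'.2 with h | h
    · exact ⟨C', hC', c2', c1', c3.trans (by gcongr), c3', p', hp', hpC'⟩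
    · exact ⟨C, hC, c1, c2, c3, c3'.trans (by gcongr), p, hp, hpC⟩
  have rc := hcov.radius_ge_one _ hC
  have d1 := not_meets_dist (by linarith) (by linarith) hCA
  have d2 := not_meets_dist (by linarith) (by linarith) hCD
  set k := Real.sqrt (1 + 2 / η ^ 2) with hk
  have hk0 : 0 < k := Real.sqrt_pos.mpr (by positivity)
  have hk2 : k ^ 2 = 1 + 2 / η ^ 2 := Real.sq_sqrt (by positivity)
  have aux : ∀ r : ℝ, 1 ≤ r → r ≤ η ^ 2 * C.2 → (k * r) ^ 2 ≤ r ^ 2 + 2 * r * C.2 := by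
    intro r hr h
    have h' : r / η ^ 2 ≤ C.2 := by rw [div_le_iff₀ hη2]; linarith
    rw [mul_pow, hk2]
    have : (1 + 2 / η ^ 2) * r ^ 2 = r ^ 2 + 2 * r * (r / η ^ 2) := by ring
    rw [this]
    gcongr
  have k1 := geom_key Q₁.1 Q₂.1 C.1 p Q₁.2 Q₂.2 C.2 (k * Q₁.2) (k * Q₂.2) (by linarith)
    (by linarith) (by linarith) (by positivity) (by positivity) (aux _ r1 hA) (aux _ r2 hD)
    hp hpC d1 d2
  have k2 := geom_key Q₁.1 Q₂.1 C.1 p Q₁.2 Q₂.2 C.2 (Q₁.2 + 1 / 2) (Q₂.2 + 1 / 2) (by linarith)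
    (by linarith) (by linarith) (by positivity) (by positivity) (by nlinarith) (by nlinarith)
    hp hpC d1 d2
  apply le_csInf
  · exact ⟨_, Q₁.1, Metric.mem_closedBall_self (by linarith), Q₂.1,
      Metric.mem_closedBall_self (by linarith), rfl⟩
  · rintro d ⟨a, ha, b, hb, rfl⟩
    have ha' : dist a Q₁.1 ≤ Q₁.2 := ha
    have hb' : dist b Q₂.1 ≤ Q₂.2 := hb
    have t := dist_triangle4 Q₁.1 a b Q₂.1
    rw [dist_comm Q₁.1 a] at t
    apply max_le
    · linarith
    · linarith

end
end

section
/- Let Q ∈ 𝒞 and x ∈ Q. Then every point y ∈ ℝ³ satisfies y ∈ Q^{(4⌈|x−y|⌉)}, where ⌈·⌉ denotes the ceiling function. -/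
open MeasureTheory Real Set Metric Filter
open scoped BigOperators ENNReal

noncomputable section

variable {F : Type} [NormedAddCommGroup F] [NormedSpace ℝ F]

lemma aux_ineq {r a b r0 r4 s X Y : ℝ} (hr : 1 ≤ r) (h0 : 1 ≤ r0) (h4 : 1 ≤ r4)
    (ha : r0 < a) (hb : r4 < b) (hab : a + b ≤ r0 + r4 + 1) (hs0 : 0 ≤ s) (hs : s ≤ r)
    (hX : r + r0 < X) (hY : r + r4 < Y)
    (h : b * X ^ 2 + a * Y ^ 2 = (a + b) * (s ^ 2 + a * b)) : False := by
  have hX2 : (r + r0) ^ 2 ≤ X ^ 2 := by gcongr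
  have hY2 : (r + r4) ^ 2 ≤ Y ^ 2 := by gcongr
  have hX3 : (r + r0) ^ 2 < X ^ 2 := by gcongr
  have hs2 : s ^ 2 ≤ r ^ 2 := by gcongr
  have a0 : 0 < a := by linarith
  have b0 : 0 < b := by linarith
  have h1 : b * (r + r0) ^ 2 < b * X ^ 2 := by gcongr
  have h2 : a * (r + r4) ^ 2 ≤ a * Y ^ 2 := by gcongr
  have h3 : (a + b) * (s ^ 2 + a * b) ≤ (a + b) * (r ^ 2 + a * b) := by gcongr
  have h5 : b * r0 ≤ b * r0 * r := le_mul_of_one_le_right (by positivity) hr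
  have h6 : a * r4 ≤ a * r4 * r := le_mul_of_one_le_right (by positivity) hr
  have h7 : b * (2 * r0 + r0 ^ 2) + a * (2 * r4 + r4 ^ 2) < (a + b) * (a * b) := by
    nlinarith
  obtain ⟨α, rfl⟩ : ∃ α, a = r0 + α := ⟨a - r0, by ring⟩
  obtain ⟨β, rfl⟩ : ∃ β, b = r4 + β := ⟨b - r4, by ring⟩
  have hα : 0 < α := by linarith
  have hβ : 0 < β := by linarith
  have hαβ : α + β ≤ 1 := by linarith
  have k1 : 0 ≤ (r4 + β) * (2 * r0) * (1 - α - β) :=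
    mul_nonneg (by positivity) (by linarith)
  have k2 : 0 ≤ (r0 + α) * (2 * r4) * (1 - α - β) :=
    mul_nonneg (by positivity) (by linarith)
  have k3 : α * β ≤ 1 := by nlinarith
  have k4 : 1 ≤ r0 * r4 := by nlinarith
  have k5 : 0 ≤ (α + β) * (r0 * r4 - α * β) := mul_nonneg (by positivity) (by linarith)
  have k6 : 0 ≤ (α + β) * (r0 * r4) := by positivity
  have k7 : 0 ≤ β ^ 2 * r0 := by positivity
  have k8 : 0 ≤ α ^ 2 * r4 := by positivity
  nlinarith

lemma aux_stewart (v w : E3) (τ : ℝ) :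
    (1 - τ) * ‖v‖ ^ 2 + τ * ‖v - w‖ ^ 2 = ‖v - τ • w‖ ^ 2 + τ * (1 - τ) * ‖w‖ ^ 2 := by
  rw [norm_sub_sq_real, norm_sub_sq_real, inner_smul_right, norm_smul, mul_pow,
    Real.norm_eq_abs, sq_abs]
  ring

lemma aux_touch {σ η : ℝ} {𝒞 : Set BallData} (hcov : IsCover σ η 𝒞) {Q : BallData}
    (hQ : Q ∈ 𝒞) :
    IsClosed (⋃ B ∈ {B | B ∈ 𝒞 ∧ (ballSet Q ∩ ballSet B).Nonempty}, ballSet B) := by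
  have hf : {B | B ∈ 𝒞 ∧ (ballSet Q ∩ ballSet B).Nonempty}.Finite := by
    refine ((hcov.overlap_finite Q hQ).insert Q).subset ?_
    intro B hB
    by_cases h : B = Q
    · exact Or.inl h
    · exact Or.inr ⟨hB.1, h, hB.2⟩
  exact hf.isClosed_biUnion fun B _ => Metric.isClosed_closedBall

lemma aux_chain {σ η : ℝ} {𝒞 : Set BallData} (hcov : IsCover σ η 𝒞) {Q B : BallData}
    (hQ : Q ∈ 𝒞) (hB : B ∈ 𝒞) {x y : E3} (hx : x ∈ ballSet Q) (hy : y ∈ ballSet B)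
    (hxy : dist x y ≤ 1) :
    ∃ A ∈ 𝒞, ∃ A' ∈ 𝒞, (ballSet Q ∩ ballSet A).Nonempty ∧ (ballSet A ∩ ballSet A').Nonempty ∧
      (ballSet B ∩ ballSet A').Nonempty := by
  have rQ := hcov.radius_ge_one Q hQ
  have rB := hcov.radius_ge_one B hB
  have cQ : Q.1 ∈ ballSet Q := Metric.mem_closedBall_self (by linarith)
  have cB : B.1 ∈ ballSet B := Metric.mem_closedBall_self (by linarith)
  have hconn : IsPreconnected (segment ℝ Q.1 B.1) := (convex_segment _ _).isPreconnected
  have key := isPreconnected_closed_iff.1 hconn _ _ (aux_touch hcov hQ) (aux_touch hcov hB) ?_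
    ⟨Q.1, left_mem_segment _ _ _, mem_biUnion (x := Q) ⟨hQ, Q.1, cQ, cQ⟩ cQ⟩
    ⟨B.1, right_mem_segment _ _ _, mem_biUnion (x := B) ⟨hB, B.1, cB, cB⟩ cB⟩
  · obtain ⟨p, _, h1, h2⟩ := key
    simp only [mem_iUnion] at h1 h2
    obtain ⟨A, hA, hpA⟩ := h1
    obtain ⟨A', hA', hpA'⟩ := h2
    exact ⟨A, hA.1, A', hA'.1, hA.2, ⟨p, hpA, hpA'⟩, hA'.2⟩
  · intro p hp
    obtain ⟨C, hC, hpC⟩ := hcov.covers p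
    by_cases h1 : (ballSet Q ∩ ballSet C).Nonempty
    · exact Or.inl (mem_biUnion (x := C) ⟨hC, h1⟩ hpC)
    by_cases h2 : (ballSet B ∩ ballSet C).Nonempty
    · exact Or.inr (mem_biUnion (x := C) ⟨hC, h2⟩ hpC)
    exfalso
    have rC := hcov.radius_ge_one C hC
    have hpQ : p ∉ ballSet Q := fun h => h1 ⟨p, h, hpC⟩
    have hpB : p ∉ ballSet B := fun h => h2 ⟨p, h, hpC⟩
    rw [Set.not_nonempty_iff_eq_empty, ← Set.disjoint_iff_inter_eq_empty] at h1 h2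
    unfold ballSet at h1 h2 hpQ hpB hpC hx hy
    rw [disjoint_closedBall_closedBall_iff (by linarith) (by linarith)] at h1 h2
    rw [Metric.mem_closedBall] at hpQ hpB hpC hx hy
    rw [segment_eq_image'] at hp
    obtain ⟨τ, ⟨hτ0, hτ1⟩, rfl⟩ := hp
    have hD : dist Q.1 B.1 ≤ Q.2 + B.2 + 1 := by
      have t1 := dist_triangle4 Q.1 x y B.1
      rw [dist_comm Q.1 x] at t1
      linarith
    have st := aux_stewart (C.1 - Q.1) (B.1 - Q.1) τ
    have e1 : C.1 - Q.1 - (B.1 - Q.1) = C.1 - B.1 := by abel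
    have e2 : C.1 - Q.1 - τ • (B.1 - Q.1) = C.1 - (Q.1 + τ • (B.1 - Q.1)) := by abel
    rw [e1, e2, ← dist_eq_norm, ← dist_eq_norm, ← dist_eq_norm, ← dist_eq_norm,
      dist_comm C.1 Q.1, dist_comm C.1 B.1, dist_comm B.1 Q.1, dist_comm C.1 _] at st
    have ea : dist (Q.1 + τ • (B.1 - Q.1)) Q.1 = τ * dist Q.1 B.1 := by
      rw [dist_eq_norm, add_sub_cancel_left, norm_smul, Real.norm_of_nonneg hτ0,
        dist_comm, dist_eq_norm]
    have eb : dist (Q.1 + τ • (B.1 - Q.1)) B.1 = (1 - τ) * dist Q.1 B.1 := by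
      have : Q.1 + τ • (B.1 - Q.1) - B.1 = (1 - τ) • (Q.1 - B.1) := by module
      rw [dist_eq_norm, this, norm_smul, Real.norm_of_nonneg (by linarith), dist_eq_norm]
    rw [ea] at hpQ
    rw [eb] at hpB
    push Not at hpQ hpB
    refine aux_ineq rC rQ rB hpQ hpB (by linarith) dist_nonneg hpC
      (X := dist Q.1 C.1) (Y := dist B.1 C.1) (by linarith) (by linarith) ?_
    linear_combination (dist Q.1 B.1) * st

lemma aux_layer_succ {𝒞 : Set BallData} {Q A B : BallData} {n : ℕ}
    (hA : ballSet A ⊆ layerU 𝒞 Q n) (hB : B ∈ 𝒞) (h : (ballSet A ∩ ballSet B).Nonempty) :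
    ballSet B ⊆ layerU 𝒞 Q (n + 1) := by
  obtain ⟨p, hp1, hp2⟩ := h
  intro z hz
  exact mem_biUnion (x := B) ⟨hB, p, hp2, hA hp1⟩ hz

lemma aux_step {σ η : ℝ} {𝒞 : Set BallData} (hcov : IsCover σ η 𝒞) {Q : BallData} {n : ℕ}
    {z y : E3} (hz : z ∈ layerU 𝒞 Q n) (h : dist z y ≤ 1) : y ∈ layerU 𝒞 Q (n + 4) := by
  obtain ⟨Q', hQ', hzQ⟩ := hcov.covers z
  obtain ⟨B, hB, hyB⟩ := hcov.covers y
  obtain ⟨A, hA, A', hA', h1, h2, h3⟩ := aux_chain hcov hQ' hB hzQ hyB h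
  have s1 : ballSet Q' ⊆ layerU 𝒞 Q (n + 1) := fun w hw =>
    mem_biUnion (x := Q') ⟨hQ', z, hzQ, hz⟩ hw
  have s2 := aux_layer_succ s1 hA h1
  have s3 := aux_layer_succ s2 hA' h2
  rw [Set.inter_comm] at h3
  exact aux_layer_succ s3 hB h3 hyB

lemma aux_main {σ η : ℝ} {𝒞 : Set BallData} (hcov : IsCover σ η 𝒞) {Q : BallData}
    {x : E3} (hx : x ∈ ballSet Q) (n : ℕ) :
    ∀ y : E3, dist x y ≤ n → y ∈ layerU 𝒞 Q (4 * n) := by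
  induction n with
  | zero =>
    intro y hy
    have : x = y := dist_le_zero.1 (by simpa using hy)
    subst this
    exact hx
  | succ n ih =>
    intro y hy
    push_cast at hy
    have hn : (0 : ℝ) < n + 1 := by positivity
    have h1 : dist x (AffineMap.lineMap x y ((n : ℝ) / (n + 1))) ≤ n := by
      rw [dist_left_lineMap, Real.norm_of_nonneg (by positivity), div_mul_eq_mul_div,
        div_le_iff₀ hn]
      gcongr
    have h2 : dist (AffineMap.lineMap x y ((n : ℝ) / (n + 1))) y ≤ 1 := by
      have : 1 - (n : ℝ) / (n + 1) = 1 / (n + 1) := by field_simp; ring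
      rw [dist_lineMap_right, this, Real.norm_of_nonneg (by positivity), div_mul_eq_mul_div,
        div_le_iff₀ hn]
      linarith
    exact aux_step hcov (ih _ h1) h2

/-- Corollary 3.2: if `x ∈ Q ∈ 𝒞` then every `y ∈ ℝ³` lies in `Q^{(4⌈|x−y|⌉)}`. -/
theorem mem_layer_ceil_dist (σ η : ℝ) (hσ : 0 < σ) (hη : 0 < η)
    (𝒞 : Set BallData) (hcov : IsCover σ η 𝒞)
    (Q : BallData) (hQ : Q ∈ 𝒞) (x : E3) (hx : x ∈ ballSet Q) (y : E3) :
    y ∈ layerU 𝒞 Q (4 * ⌈dist x y⌉₊) := by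
  exact aux_main hcov hx _ y (Nat.le_ceil _)

end
end
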